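/- Let D ⊆ ℝ² be open and connected with coordinates (u,v), let H ≠ 0 be a real constant, and let q, r : D → ℝ be smooth with ∂_u q = 0, ∂_v r = 0, and 1 + qr nonvanishing on D. Let φ : D → ℝ³ be smooth with φ_u = (½(1+q²), −½(1−q²), −q)·(2 r_u/(H(1+qr)²)) and φ_v = (−½(1+r²), −½(1−r²), −r)·(2 q_v/(H(1+qr)²)). Then the map c := φ + (1/(H(1+qr)))·(q−r, q+r, qr−1) is constant on D, and ⟨φ − c, φ − c⟩ = 1/H² at every point of D; i.e., a totally umbilic non-minimal timelike surface is part of the pseudosphere of radius 1/|H| centered at c. -/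

import Mathlib

noncomputable section

/-- The Minkowski bilinear form on `𝔼³₁ = ℝ³`: `⟨a,b⟩ = −a₁b₁ + a₂b₂ + a₃b₃`. -/
def mink (a b : ℝ × ℝ × ℝ) : ℝ := -(a.1 * b.1) + a.2.1 * b.2.1 + a.2.2 * b.2.2

/-- Partial derivative in the first coordinate. -/
def pu {E : Type*} [NormedAddCommGroup E] [NormedSpace ℝ E] (f : ℝ × ℝ → E) (w : ℝ × ℝ) : E :=
  fderiv ℝ f w (1, 0)

/-- Partial derivative in the second coordinate. -/
def pv {E : Type*} [NormedAddCommGroup E] [NormedSpace ℝ E] (f : ℝ × ℝ → E) (w : ℝ × ℝ) : E :=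
  fderiv ℝ f w (0, 1)

/-!
The vector field `N = (1 + qr)⁻¹ (q − r, q + r, qr − 1)` is a spacelike unit normal of the surface.
When `q_u = 0` and `r_v = 0`, differentiating this rational expression gives the Weingarten
equations `N_u = −H φ_u` and `N_v = −H φ_v`: the shape operator is `H` times the identity. Hence
`φ + H⁻¹ N` has zero derivative, so it is constant, and `φ` lies at distance `1 / |H|` from it.
-/

section Calculus

variable {E F : Type*} [NormedAddCommGroup E] [NormedSpace ℝ E]
  [NormedAddCommGroup F] [NormedSpace ℝ F]

theorem fderiv_eq_smul_of_pu_of_pv {f g : ℝ × ℝ → E} {w : ℝ × ℝ} {c : ℝ}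
    (hu : pu f w = c • pu g w) (hv : pv f w = c • pv g w) :
    fderiv ℝ f w = c • fderiv ℝ g w := by
  ext
  · simpa [pu] using hu
  · simpa [pv] using hv

theorem add_inv_smul_eq_of_fderiv_eq_neg_smul {D : Set E} (hD : IsOpen D)
    (hDconn : IsPreconnected D) {H : ℝ} (hH : H ≠ 0) {φ N : E → F}
    (hφ : DifferentiableOn ℝ φ D) (hN : DifferentiableOn ℝ N D)
    (hderiv : ∀ x ∈ D, fderiv ℝ N x = -H • fderiv ℝ φ x) {x y : E} (hx : x ∈ D) (hy : y ∈ D) :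
    φ x + H⁻¹ • N x = φ y + H⁻¹ • N y := by
  have hzero : Set.EqOn (fderiv ℝ (φ + H⁻¹ • N)) 0 D := fun z hz => by
    have hφz : DifferentiableAt ℝ φ z := hφ.differentiableAt (hD.mem_nhds hz)
    have hNz : DifferentiableAt ℝ N z := hN.differentiableAt (hD.mem_nhds hz)
    calc fderiv ℝ (φ + H⁻¹ • N) z
        = fderiv ℝ φ z + H⁻¹ • fderiv ℝ N z := by
          rw [fderiv_add hφz (hNz.const_smul H⁻¹), fderiv_const_smul hNz]
      _ = 0 := by
          rw [hderiv z hz, neg_smul, smul_neg, inv_smul_smul₀ hH, add_neg_cancel]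
  exact hD.is_const_of_fderiv_eq_zero hDconn (hφ.add (hN.const_smul H⁻¹)) hzero hx hy

end Calculus

theorem mink_neg_neg (a b : ℝ × ℝ × ℝ) : mink (-a) (-b) = mink a b := by
  simp [mink]

theorem mink_smul_smul (s t : ℝ) (a b : ℝ × ℝ × ℝ) :
    mink (s • a) (t • b) = s * t * mink a b := by
  simp only [mink, Prod.smul_fst, Prod.smul_snd, smul_eq_mul]
  ring

/-- The lightlike vector spanning the direction of `φ_u` in the Weierstraß representation of a
timelike surface with data `q`, `r`. -/
def nullDirU (q : ℝ) : ℝ × ℝ × ℝ := (1 / 2 * (1 + q ^ 2), -(1 / 2) * (1 - q ^ 2), -q)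

/-- The lightlike vector spanning the direction of `φ_v` in the Weierstraß representation of a
timelike surface with data `q`, `r`. -/
def nullDirV (r : ℝ) : ℝ × ℝ × ℝ := (-(1 / 2) * (1 + r ^ 2), -(1 / 2) * (1 - r ^ 2), -r)

/-- The unit normal of a timelike surface with Weierstraß data `q`, `r`, i.e. the value of its
Gauss map in the unit pseudosphere. Where `1 + q * r = 0` it takes the junk value `0`. -/
def unitNormal (q r : ℝ) : ℝ × ℝ × ℝ := (1 + q * r)⁻¹ • (q - r, q + r, q * r - 1)

theorem one_div_mul_smul_eq_inv_smul_unitNormal (H q r : ℝ) :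
    (1 / (H * (1 + q * r))) • ((q - r, q + r, q * r - 1) : ℝ × ℝ × ℝ) =
      H⁻¹ • unitNormal q r := by
  rw [unitNormal, smul_smul, one_div, mul_inv]

theorem mink_unitNormal_self {q r : ℝ} (h : 1 + q * r ≠ 0) :
    mink (unitNormal q r) (unitNormal q r) = 1 := by
  have hnumerator : mink (q - r, q + r, q * r - 1) (q - r, q + r, q * r - 1) = (1 + q * r) ^ 2 := by
    simp only [mink]
    ring
  rw [unitNormal, mink_smul_smul, hnumerator]
  field_simp

theorem hasFDerivAt_unitNormal {E : Type*} [NormedAddCommGroup E] [NormedSpace ℝ E]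
    {q r : E → ℝ} {q' r' : E →L[ℝ] ℝ} {x : E} (hq : HasFDerivAt q q' x)
    (hr : HasFDerivAt r r' x) (h : 1 + q x * r x ≠ 0) :
    HasFDerivAt (fun y => unitNormal (q y) (r y))
      (-(2 / (1 + q x * r x) ^ 2) •
        (r'.smulRight (nullDirU (q x)) + q'.smulRight (nullDirV (r x)))) x := by
  have hqr := hq.mul hr
  have hscale := (hasDerivAt_inv h).comp_hasFDerivAt x (hqr.const_add 1)
  have hnumerator := (hq.sub hr).prodMk ((hq.add hr).prodMk (hqr.sub_const 1))
  refine (hscale.smul hnumerator).congr_fderiv (ContinuousLinearMap.ext fun v => ?_)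
  simp only [nullDirU, nullDirV, Function.comp_apply, Pi.mul_apply, Pi.add_apply, Pi.sub_apply,
    add_apply, sub_apply, smul_apply, ContinuousLinearMap.prod_apply,
    ContinuousLinearMap.smulRight_apply, smul_eq_mul, Prod.smul_mk, Prod.mk_add_mk]
  ext <;> field_simp <;> ring

section Weingarten

variable {q r : ℝ × ℝ → ℝ} {w : ℝ × ℝ}

theorem pu_unitNormal (hq : DifferentiableAt ℝ q w) (hr : DifferentiableAt ℝ r w)
    (hqu : pu q w = 0) (h : 1 + q w * r w ≠ 0) :
    pu (fun z => unitNormal (q z) (r z)) w =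
      -(2 * pu r w / (1 + q w * r w) ^ 2) • nullDirU (q w) := by
  rw [pu] at hqu
  rw [pu, (hasFDerivAt_unitNormal hq.hasFDerivAt hr.hasFDerivAt h).fderiv]
  simp [hqu, pu, smul_smul, mul_div_right_comm]

theorem pv_unitNormal (hq : DifferentiableAt ℝ q w) (hr : DifferentiableAt ℝ r w)
    (hrv : pv r w = 0) (h : 1 + q w * r w ≠ 0) :
    pv (fun z => unitNormal (q z) (r z)) w =
      -(2 * pv q w / (1 + q w * r w) ^ 2) • nullDirV (r w) := by
  rw [pv] at hrv
  rw [pv, (hasFDerivAt_unitNormal hq.hasFDerivAt hr.hasFDerivAt h).fderiv]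
  simp [hrv, pv, smul_smul, mul_div_right_comm]

theorem fderiv_unitNormal_eq_neg_smul_fderiv {H : ℝ} (hH : H ≠ 0) {φ : ℝ × ℝ → ℝ × ℝ × ℝ}
    (hq : DifferentiableAt ℝ q w) (hr : DifferentiableAt ℝ r w)
    (hqu : pu q w = 0) (hrv : pv r w = 0) (h : 1 + q w * r w ≠ 0)
    (hφu : pu φ w = (2 * pu r w / (H * (1 + q w * r w) ^ 2)) • nullDirU (q w))
    (hφv : pv φ w = (2 * pv q w / (H * (1 + q w * r w) ^ 2)) • nullDirV (r w)) :
    fderiv ℝ (fun z => unitNormal (q z) (r z)) w = -H • fderiv ℝ φ w := by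
  have hscale (a : ℝ) :
      -(a / (1 + q w * r w) ^ 2) = -H * (a / (H * (1 + q w * r w) ^ 2)) := by
    field_simp
  apply fderiv_eq_smul_of_pu_of_pv
  · rw [pu_unitNormal hq hr hqu h, hφu, smul_smul, hscale]
  · rw [pv_unitNormal hq hr hrv h, hφv, smul_smul, hscale]

end Weingarten

theorem totally_umbilic_is_pseudosphere_general
    (D : Set (ℝ × ℝ)) (hD : IsOpen D) (hDconn : IsPreconnected D)
    (H : ℝ) (hH : H ≠ 0)
    (q r : ℝ × ℝ → ℝ) (hq : DifferentiableOn ℝ q D) (hr : DifferentiableOn ℝ r D)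
    (hqu : ∀ w ∈ D, pu q w = 0) (hrv : ∀ w ∈ D, pv r w = 0)
    (hqrnz : ∀ w ∈ D, 1 + q w * r w ≠ 0)
    (φ : ℝ × ℝ → ℝ × ℝ × ℝ) (hφ : DifferentiableOn ℝ φ D)
    (hφu : ∀ w ∈ D, pu φ w = (2 * pu r w / (H * (1 + q w * r w) ^ 2)) •
      ((1 / 2 * (1 + q w ^ 2), -(1 / 2) * (1 - q w ^ 2), -q w) : ℝ × ℝ × ℝ))
    (hφv : ∀ w ∈ D, pv φ w = (2 * pv q w / (H * (1 + q w * r w) ^ 2)) •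
      ((-(1 / 2) * (1 + r w ^ 2), -(1 / 2) * (1 - r w ^ 2), -r w) : ℝ × ℝ × ℝ)) :
    (∀ w ∈ D, ∀ w₀ ∈ D,
      φ w + (1 / (H * (1 + q w * r w))) •
        ((q w - r w, q w + r w, q w * r w - 1) : ℝ × ℝ × ℝ)
      = φ w₀ + (1 / (H * (1 + q w₀ * r w₀))) •
        ((q w₀ - r w₀, q w₀ + r w₀, q w₀ * r w₀ - 1) : ℝ × ℝ × ℝ)) ∧
    ∀ w ∈ D,
      mink (φ w - (φ w + (1 / (H * (1 + q w * r w))) •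
          ((q w - r w, q w + r w, q w * r w - 1) : ℝ × ℝ × ℝ)))
        (φ w - (φ w + (1 / (H * (1 + q w * r w))) •
          ((q w - r w, q w + r w, q w * r w - 1) : ℝ × ℝ × ℝ))) = 1 / H ^ 2 := by
  simp only [one_div_mul_smul_eq_inv_smul_unitNormal]
  have hq_at (w) (hw : w ∈ D) : DifferentiableAt ℝ q w := hq.differentiableAt (hD.mem_nhds hw)
  have hr_at (w) (hw : w ∈ D) : DifferentiableAt ℝ r w := hr.differentiableAt (hD.mem_nhds hw)
  have hN : DifferentiableOn ℝ (fun w => unitNormal (q w) (r w)) D := fun w hw =>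
    (hasFDerivAt_unitNormal (hq_at w hw).hasFDerivAt (hr_at w hw).hasFDerivAt
      (hqrnz w hw)).differentiableAt.differentiableWithinAt
  have weingarten (w) (hw : w ∈ D) :
      fderiv ℝ (fun z => unitNormal (q z) (r z)) w = -H • fderiv ℝ φ w :=
    fderiv_unitNormal_eq_neg_smul_fderiv hH (hq_at w hw) (hr_at w hw) (hqu w hw) (hrv w hw)
      (hqrnz w hw) (hφu w hw) (hφv w hw)
  refine ⟨fun w hw w₀ hw₀ =>
    add_inv_smul_eq_of_fderiv_eq_neg_smul hD hDconn hH hφ hN weingarten hw hw₀, fun w hw => ?_⟩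
  rw [sub_add_cancel_left, mink_neg_neg, mink_smul_smul, mink_unitNormal_self (hqrnz w hw)]
  ring

/-- A totally umbilic non-minimal timelike surface (constant mean curvature `H ≠ 0`,
Lorentz antiholomorphic `q`, Lorentz holomorphic `r`, Weierstraß data
`f = 2r_u/(H(1+qr)²)`, `g = 2q_v/(H(1+qr)²)`) is part of the pseudosphere of radius
`1/|H|` centered at the constant point `c = φ + (1/(H(1+qr)))(q−r, q+r, qr−1)`. -/
theorem totally_umbilic_is_pseudosphere
    (D : Set (ℝ × ℝ)) (hD : IsOpen D) (hDconn : IsConnected D)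
    (H : ℝ) (hH : H ≠ 0)
    (q r : ℝ × ℝ → ℝ) (hq : ContDiffOn ℝ (⊤ : ℕ∞) q D) (hr : ContDiffOn ℝ (⊤ : ℕ∞) r D)
    (hqu : ∀ w ∈ D, pu q w = 0) (hrv : ∀ w ∈ D, pv r w = 0)
    (hqrnz : ∀ w ∈ D, 1 + q w * r w ≠ 0)
    (φ : ℝ × ℝ → ℝ × ℝ × ℝ) (hφ : ContDiffOn ℝ (⊤ : ℕ∞) φ D)
    (hφu : ∀ w ∈ D, pu φ w = (2 * pu r w / (H * (1 + q w * r w) ^ 2)) •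
      ((1/2 * (1 + q w^2), -(1/2) * (1 - q w^2), -q w) : ℝ × ℝ × ℝ))
    (hφv : ∀ w ∈ D, pv φ w = (2 * pv q w / (H * (1 + q w * r w) ^ 2)) •
      ((-(1/2) * (1 + r w^2), -(1/2) * (1 - r w^2), -r w) : ℝ × ℝ × ℝ)) :
    (∀ w ∈ D, ∀ w₀ ∈ D,
      φ w + (1 / (H * (1 + q w * r w))) •
        ((q w - r w, q w + r w, q w * r w - 1) : ℝ × ℝ × ℝ)
      = φ w₀ + (1 / (H * (1 + q w₀ * r w₀))) •
        ((q w₀ - r w₀, q w₀ + r w₀, q w₀ * r w₀ - 1) : ℝ × ℝ × ℝ)) ∧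
    ∀ w ∈ D,
      mink (φ w - (φ w + (1 / (H * (1 + q w * r w))) •
          ((q w - r w, q w + r w, q w * r w - 1) : ℝ × ℝ × ℝ)))
        (φ w - (φ w + (1 / (H * (1 + q w * r w))) •
          ((q w - r w, q w + r w, q w * r w - 1) : ℝ × ℝ × ℝ))) = 1 / H ^ 2 := by
  exact totally_umbilic_is_pseudosphere_general D hD hDconn.isPreconnected H hH q r
    (hq.differentiableOn (by simp)) (hr.differentiableOn (by simp)) hqu hrv hqrnz
    φ (hφ.differentiableOn (by simp)) hφu hφv
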